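/- arXiv:1505.07099 — 4 statements merged into one kernel-verified Lean document; each statement's English description precedes it below -/
import Mathlib

section
/- The series over pairs of nonnegative integers (n₁, n₂) with n := n₁ + n₂ ≥ 2 of the terms ((2n₁)! (2n₂)!) / (4ⁿ · (n₁!)² · (n₂!)²) · (2n − 1) / (n · (n−1)²) is convergent (summable). -/
theorem aux_sq (n : ℕ) :
    (((2 * n).factorial : ℝ) / (4 ^ n * (n.factorial : ℝ) ^ 2)) ^ 2 * ((n : ℝ) + 1) ≤ 1 := by
  induction n with
  | zero => simp
  | succ n ih =>
    have hn : (0 : ℝ) ≤ n := Nat.cast_nonneg n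
    have e : (((2 * (n + 1)).factorial : ℝ) / (4 ^ (n + 1) * ((n + 1).factorial : ℝ) ^ 2))
        = ((2 * n).factorial : ℝ) / (4 ^ n * (n.factorial : ℝ) ^ 2)
          * ((2 * n + 1) / (2 * n + 2)) := by
      have h0 : (n.factorial : ℝ) ≠ 0 := by positivity
      rw [show 2 * (n + 1) = (2 * n + 1) + 1 by ring, Nat.factorial_succ, Nat.factorial_succ,
        Nat.factorial_succ]
      push_cast
      field_simp
      ring
    rw [e]
    set a := ((2 * n).factorial : ℝ) / (4 ^ n * (n.factorial : ℝ) ^ 2) with ha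
    have h2 : ((2 * (n : ℝ) + 1) / (2 * n + 2)) ^ 2 * ((n : ℝ) + 1 + 1) ≤ n + 1 := by
      rw [div_pow, div_mul_eq_mul_div, div_le_iff₀ (by positivity)]
      nlinarith
    push_cast
    calc (a * ((2 * (n : ℝ) + 1) / (2 * n + 2))) ^ 2 * ((n : ℝ) + 1 + 1)
        = a ^ 2 * (((2 * (n : ℝ) + 1) / (2 * n + 2)) ^ 2 * ((n : ℝ) + 1 + 1)) := by ring
      _ ≤ a ^ 2 * (n + 1) := by gcongr
      _ ≤ 1 := ih

theorem aux_le (n : ℕ) :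
    ((2 * n).factorial : ℝ) / (4 ^ n * (n.factorial : ℝ) ^ 2) ≤ 1 / √((n : ℝ) + 1) := by
  have hs : 0 < √((n : ℝ) + 1) := Real.sqrt_pos.2 (by positivity)
  rw [le_div_iff₀ hs]
  have h := aux_sq n
  rw [← Real.sq_sqrt (show (0 : ℝ) ≤ (n : ℝ) + 1 by positivity), ← mul_pow] at h
  exact (sq_le_one_iff₀ (by positivity)).1 h

theorem aux_summable :
    Summable (fun n : ℕ => 1 / (√((n : ℝ) + 1) * ((n : ℝ) + 1))) := by
  have h := (summable_nat_add_iff 1).2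
    (Real.summable_one_div_nat_rpow.2 (show (1 : ℝ) < 3 / 2 by norm_num))
  refine h.congr fun n => ?_
  have hp : (0 : ℝ) < (n : ℝ) + 1 := by positivity
  push_cast
  rw [show (3 / 2 : ℝ) = 1 / 2 + 1 by norm_num, Real.rpow_add hp, Real.rpow_one,
    Real.sqrt_eq_rpow]

theorem aux_rat (a b : ℕ) (h : 2 ≤ a + b) :
    (((2 * (a + b) - 1 : ℕ) : ℝ) / ((a + b : ℕ) * (((a + b - 1 : ℕ) : ℝ)) ^ 2))
      ≤ 18 * (1 / (((a : ℝ) + 1) * ((b : ℝ) + 1))) := by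
  have ha : (0 : ℝ) ≤ a := Nat.cast_nonneg a
  have hb : (0 : ℝ) ≤ b := Nat.cast_nonneg b
  obtain ⟨m, hm⟩ : ∃ m, a + b = m + 2 := ⟨a + b - 2, by omega⟩
  have hm' : (a : ℝ) + b = m + 2 := by exact_mod_cast hm
  have h0 : (0 : ℝ) ≤ m := Nat.cast_nonneg m
  rw [hm, show 2 * (m + 2) - 1 = 2 * m + 3 by omega, show m + 2 - 1 = m + 1 by omega]
  push_cast
  rw [mul_one_div, div_le_div_iff₀ (by positivity) (by positivity)]
  have h1 : ((a : ℝ) + 1) * ((b : ℝ) + 1) ≤ (m + 3) ^ 2 := by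
    nlinarith [mul_nonneg ha hb]
  have h2 : ((m : ℝ) + 3) ^ 2 ≤ 9 * (m + 1) ^ 2 := by nlinarith
  calc (2 * (m : ℝ) + 3) * (((a : ℝ) + 1) * ((b : ℝ) + 1))
      ≤ (2 * (m + 2)) * (9 * (m + 1) ^ 2) := by
        exact mul_le_mul (by linarith) (h1.trans h2) (by positivity) (by positivity)
    _ = 18 * ((m + 2) * (m + 1) ^ 2) := by ring

/-- The combinatorial series `∑_{n₁+n₂ ≥ 2} ((2n₁)!(2n₂)!)/(4^n (n₁!)²(n₂!)²) ·
(2n−1)/(n(n−1)²)` (with `n = n₁ + n₂`) is convergent. -/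
theorem series_summable :
    Summable (fun q : ℕ × ℕ =>
      if 2 ≤ q.1 + q.2 then
        (((2 * q.1).factorial * (2 * q.2).factorial : ℕ) : ℝ) /
            (4 ^ (q.1 + q.2) * ((q.1.factorial : ℝ)) ^ 2 * ((q.2.factorial : ℝ)) ^ 2) *
          (((2 * (q.1 + q.2) - 1 : ℕ) : ℝ) /
            ((q.1 + q.2 : ℕ) * (((q.1 + q.2 - 1 : ℕ) : ℝ)) ^ 2))
      else 0) := by
  have hS := (aux_summable.mul_of_nonneg aux_summable
    (fun n => by positivity) (fun n => by positivity)).mul_left 18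
  refine Summable.of_nonneg_of_le (fun q => ?_) (fun q => ?_) hS
  · split_ifs <;> positivity
  · obtain ⟨a, b⟩ := q
    dsimp only
    split_ifs with h
    · have e : (((2 * a).factorial * (2 * b).factorial : ℕ) : ℝ) /
            (4 ^ (a + b) * ((a.factorial : ℝ)) ^ 2 * ((b.factorial : ℝ)) ^ 2)
          = (((2 * a).factorial : ℝ) / (4 ^ a * (a.factorial : ℝ) ^ 2))
            * (((2 * b).factorial : ℝ) / (4 ^ b * (b.factorial : ℝ) ^ 2)) := by
        rw [div_mul_div_comm]
        push_cast
        congr 1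
        ring
      rw [e]
      calc _ ≤ (1 / √((a : ℝ) + 1) * (1 / √((b : ℝ) + 1)))
              * (18 * (1 / (((a : ℝ) + 1) * ((b : ℝ) + 1)))) :=
            mul_le_mul (mul_le_mul (aux_le a) (aux_le b) (by positivity) (by positivity))
              (aux_rat a b h) (by positivity) (by positivity)
        _ = _ := by
            simp only [one_div, mul_inv]
            ring
    · positivity
end

section
/- Let T > 0. For Λ > 0, an integer n ≥ 1, and (u₁,…,u_{2n}) ∈ [0,T]^{2n} with u := min(u₁,…,u_{2n}) and v := max(u₁,…,u_{2n}), define R_{n,Λ}(u₁,…,u_{2n}) := ∫∫_{{(t₁,t₂) : 0 ≤ t₁ ≤ u, v ≤ t₂ ≤ T, t₂ − t₁ ≤ Λ}} (t₂ − t₁)^(−(1+n)) dt₁ dt₂. Then there exists a constant C > 0 (depending only on T) such that for every Λ with 0 < Λ ≤ min(T,1)/2: Σ_{(n₁,n₂) ∈ ℕ₀², n₁+n₂ ≥ 1} ((2n₁)! (2n₂)!) / ((2π)² · 4^(n₁+n₂) · (n₁! n₂!)²) · ‖R_{n₁+n₂,Λ}‖²_{L²([0,T]^{2(n₁+n₂)})}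 ≤ C · Λ · (ln Λ)². -/
open MeasureTheory Real ENNReal

lemma gap_conv (n : ℕ) :
    ∑ p ∈ Finset.HasAntidiagonal.antidiagonal n, ((p.1.centralBinom : ℝ) * (p.2.centralBinom : ℝ)) = 4 ^ n := by
  set A : PowerSeries ℝ := PowerSeries.mk (fun n => (n.centralBinom : ℝ)) with hA
  have h1 : PowerSeries.derivative ℝ A
      = 2 * A + 4 * (PowerSeries.X * PowerSeries.derivative ℝ A) := by
    ext n
    have h2 : (2 : PowerSeries ℝ) = PowerSeries.C (2:ℝ) := (map_ofNat PowerSeries.C 2).symm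
    have h4 : (4 : PowerSeries ℝ) = PowerSeries.C (4:ℝ) := (map_ofNat PowerSeries.C 4).symm
    have hs := Nat.succ_mul_centralBinom_succ n
    have hs' : ((n:ℝ) + 1) * ((n+1).centralBinom : ℝ) = 2 * (2 * n + 1) * (n.centralBinom : ℝ) := by
      exact_mod_cast hs
    rw [h2, h4, map_add, PowerSeries.coeff_C_mul, PowerSeries.coeff_C_mul]
    cases n with
    | zero =>
      simp [PowerSeries.coeff_derivative, hA] at hs' ⊢; exact hs'
    | succ k =>
      rw [PowerSeries.coeff_succ_X_mul]
      simp only [PowerSeries.coeff_derivative, hA, PowerSeries.coeff_mk]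
      push_cast at hs' ⊢
      linarith
  have h2 : PowerSeries.derivative ℝ (A * A)
      = 4 * (A * A) + 4 * (PowerSeries.X * PowerSeries.derivative ℝ (A * A)) := by
    have : PowerSeries.derivative ℝ (A * A) = 2 * A * PowerSeries.derivative ℝ A := by
      rw [Derivation.leibniz]; simp only [smul_eq_mul]; ring
    rw [this]
    linear_combination 2 * A * h1
  have h3 : ∀ n, PowerSeries.coeff n (A * A) = 4 ^ n := by
    intro n
    induction n with
    | zero => simp [hA]
    | succ k ih =>
      have h4 : (4 : PowerSeries ℝ) = PowerSeries.C (4:ℝ) := (map_ofNat PowerSeries.C 4).symm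
      have := congrArg (PowerSeries.coeff (R := ℝ) k) h2
      rw [h4, map_add, PowerSeries.coeff_C_mul, PowerSeries.coeff_C_mul,
        PowerSeries.coeff_derivative, ih] at this
      have h5 : PowerSeries.coeff k ((PowerSeries.X : PowerSeries ℝ) * PowerSeries.derivative ℝ (A * A))
          = k * 4 ^ k := by
        cases k with
        | zero => simp
        | succ j =>
          rw [PowerSeries.coeff_succ_X_mul, PowerSeries.coeff_derivative, ih]
          push_cast; ring
      rw [h5] at this
      have hk : (k:ℝ) + 1 ≠ 0 := by positivity
      apply mul_right_cancel₀ hk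
      rw [this]; ring
  have := h3 n
  rw [PowerSeries.coeff_mul] at this
  simpa [hA] using this

lemma gap_coef (q : ℕ × ℕ) :
    ENNReal.ofReal ((((2 * q.1).factorial * (2 * q.2).factorial : ℕ) : ℝ) /
                  ((2 * Real.pi) ^ 2 * 4 ^ (q.1 + q.2) *
                    ((q.1.factorial * q.2.factorial : ℕ) : ℝ) ^ 2)) ≤
    ENNReal.ofReal ((q.1.centralBinom : ℝ) * (q.2.centralBinom : ℝ) / 4 ^ (q.1 + q.2)) := by
  apply ENNReal.ofReal_le_ofReal
  have hc : ∀ n : ℕ, ((2 * n).factorial : ℝ) = n.centralBinom * (n.factorial : ℝ) ^ 2 := by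
    intro n
    have := Nat.choose_mul_factorial_mul_factorial (show n ≤ 2 * n by omega)
    rw [show 2 * n - n = n by omega, ← Nat.centralBinom_eq_two_mul_choose] at this
    rw [← this]; push_cast; ring
  push_cast
  rw [hc, hc]
  have hpi : (1:ℝ) ≤ (2 * Real.pi) ^ 2 := by nlinarith [Real.pi_gt_three]
  have f1 : (0:ℝ) < q.1.factorial := by positivity
  have f2 : (0:ℝ) < q.2.factorial := by positivity
  rw [div_le_div_iff₀ (by positivity) (by positivity)]
  have : 0 ≤ (q.1.centralBinom : ℝ) * (q.2.centralBinom : ℝ) * 4 ^ (q.1 + q.2) *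
     ((q.1.factorial : ℝ) * q.2.factorial) ^ 2 := by positivity
  nlinarith [mul_le_mul_of_nonneg_left hpi this]

lemma gap_tsum (B : ℕ → ℝ≥0∞) :
    ∑' q : ℕ × ℕ, (if 1 ≤ q.1 + q.2 then
      ENNReal.ofReal ((q.1.centralBinom : ℝ) * (q.2.centralBinom : ℝ) / 4 ^ (q.1 + q.2))
        * B (q.1 + q.2) else 0) = ∑' n, B (n + 1) := by
  rw [← Finset.HasAntidiagonal.sigmaAntidiagonalEquivProd.tsum_eq, ENNReal.tsum_sigma']
  have key : ∀ n : ℕ, ∑' (b : Finset.HasAntidiagonal.antidiagonal n), (if 1 ≤ b.1.1 + b.1.2 then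
      ENNReal.ofReal ((b.1.1.centralBinom : ℝ) * (b.1.2.centralBinom : ℝ) / 4 ^ (b.1.1 + b.1.2))
        * B (b.1.1 + b.1.2) else 0) = if 1 ≤ n then B n else 0 := by
    intro n
    rw [Finset.tsum_subtype (Finset.HasAntidiagonal.antidiagonal n) (fun b : ℕ × ℕ => if 1 ≤ b.1 + b.2 then
      ENNReal.ofReal ((b.1.centralBinom : ℝ) * (b.2.centralBinom : ℝ) / 4 ^ (b.1 + b.2))
        * B (b.1 + b.2) else 0)]
    rw [Finset.sum_congr rfl (g := fun b : ℕ × ℕ => if 1 ≤ n then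
      ENNReal.ofReal ((b.1.centralBinom : ℝ) * (b.2.centralBinom : ℝ) / 4 ^ n) * B n else 0)
      (fun b hb => by rw [Finset.HasAntidiagonal.mem_antidiagonal.mp hb])]
    split_ifs with hn
    · rw [← Finset.sum_mul, ← ENNReal.ofReal_sum_of_nonneg (fun _ _ => by positivity),
        ← Finset.sum_div, gap_conv, div_self (by positivity)]
      simp
    · simp
  refine (tsum_congr key).trans ?_
  rw [tsum_eq_zero_add' ENNReal.summable]
  simp

lemma gap_real {t₁ t₂ s₁ s₂ : ℝ} (ht : t₁ < t₂) (hs : s₁ < s₂)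
    (hd : 0 < min t₂ s₂ - max t₁ s₁) (ha : s₁ - t₁ ≠ 0) (hb : s₂ - t₂ ≠ 0) :
    (min t₂ s₂ - max t₁ s₁) ^ 2 / ((t₂ - t₁) * (s₂ - s₁)) < 1 ∧
    ((t₂ - t₁)⁻¹ * (s₂ - s₁)⁻¹) *
      ((min t₂ s₂ - max t₁ s₁) ^ 2 / ((t₂ - t₁) * (s₂ - s₁))) *
      (1 - (min t₂ s₂ - max t₁ s₁) ^ 2 / ((t₂ - t₁) * (s₂ - s₁)))⁻¹ ≤
    (t₂ - t₁) ^ (-(1/2) : ℝ) * (|s₁ - t₁| ^ (-(3/4) : ℝ) * |s₂ - t₂| ^ (-(3/4) : ℝ)) ∧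
    |s₁ - t₁| ≤ max (t₂ - t₁) (s₂ - s₁) ∧ |s₂ - t₂| ≤ max (t₂ - t₁) (s₂ - s₁) := by
  have pa : 0 < |s₁ - t₁| := abs_pos.mpr ha
  have pb : 0 < |s₂ - t₂| := abs_pos.mpr hb
  set δ := min t₂ s₂ - max t₁ s₁ with hδ
  have h1 : δ * (|s₁ - t₁| + |s₂ - t₂|) ≤ (t₂ - t₁) * (s₂ - s₁) - δ ^ 2 := by
    rcases le_total t₂ s₂ with h | h <;> rcases le_total t₁ s₁ with h' | h' <;>
      simp only [h, h', min_eq_left, min_eq_right, max_eq_left, max_eq_right] at hδ <;>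
      [rw [abs_of_nonneg (a := s₁ - t₁) (by linarith), abs_of_nonneg (a := s₂ - t₂) (by linarith)];
       rw [abs_of_nonpos (a := s₁ - t₁) (by linarith), abs_of_nonneg (a := s₂ - t₂) (by linarith)];
       rw [abs_of_nonneg (a := s₁ - t₁) (by linarith), abs_of_nonpos (a := s₂ - t₂) (by linarith)];
       rw [abs_of_nonpos (a := s₁ - t₁) (by linarith), abs_of_nonpos (a := s₂ - t₂) (by linarith)]] <;>
      rw [hδ] <;> nlinarith [mul_nonneg (sub_nonneg.2 h) (sub_nonneg.2 h')]
  have m1 : |s₁ - t₁| ≤ max (t₂ - t₁) (s₂ - s₁) := by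
    have e1 := min_le_left t₂ s₂
    have e2 := min_le_right t₂ s₂
    have e3 := le_max_left t₁ s₁
    have e4 := le_max_right t₁ s₁
    have e5 := le_max_left (t₂ - t₁) (s₂ - s₁)
    have e6 := le_max_right (t₂ - t₁) (s₂ - s₁)
    rw [abs_le]; constructor <;> linarith
  have m2 : |s₂ - t₂| ≤ max (t₂ - t₁) (s₂ - s₁) := by
    have e1 := min_le_left t₂ s₂
    have e2 := min_le_right t₂ s₂
    have e3 := le_max_left t₁ s₁
    have e4 := le_max_right t₁ s₁
    have e5 := le_max_left (t₂ - t₁) (s₂ - s₁)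
    have e6 := le_max_right (t₂ - t₁) (s₂ - s₁)
    rw [abs_le]; constructor <;> linarith
  have d1 : δ ≤ t₂ - t₁ := by
    have e1 := min_le_left t₂ s₂
    have e3 := le_max_left t₁ s₁
    linarith
  have d2 : δ ≤ s₂ - s₁ := by
    have e1 := min_le_right t₂ s₂
    have e3 := le_max_right t₁ s₁
    linarith
  have m3 : t₂ - t₁ ≤ max (t₂ - t₁) (s₂ - s₁) := le_max_left _ _
  have hδm : δ * max (t₂ - t₁) (s₂ - s₁) ≤ (t₂ - t₁) * (s₂ - s₁) := by
    rcases max_choice (t₂ - t₁) (s₂ - s₁) with h | h <;> rw [h] <;> nlinarith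
  have pτ : 0 < t₂ - t₁ := sub_pos.2 ht
  have pσ : 0 < s₂ - s₁ := sub_pos.2 hs
  generalize t₂ - t₁ = τ at *
  generalize s₂ - s₁ = σ at *
  generalize |s₁ - t₁| = a at *
  generalize |s₂ - t₂| = b at *
  generalize max τ σ = m at *
  clear_value δ
  have pm : 0 < m := by linarith
  have pab : 0 < a + b := by linarith
  have hpos : 0 < τ * σ - δ ^ 2 := lt_of_lt_of_le (by positivity) h1
  refine ⟨?_, ?_, m1, m2⟩
  · rw [div_lt_one (by positivity)]; linarith
  have e : (τ⁻¹ * σ⁻¹) * (δ ^ 2 / (τ * σ)) * (1 - δ ^ 2 / (τ * σ))⁻¹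
      = δ ^ 2 / ((τ * σ) * (τ * σ - δ ^ 2)) := by
    have : 1 - δ ^ 2 / (τ * σ) = (τ * σ - δ ^ 2) / (τ * σ) := by field_simp
    rw [this]; field_simp
  rw [e]
  have k1 : δ ^ 2 / ((τ * σ) * (τ * σ - δ ^ 2)) ≤ (m * (a + b))⁻¹ := by
    rw [← one_div, div_le_div_iff₀ (by positivity) (by positivity), one_mul]
    calc δ ^ 2 * (m * (a + b)) = (δ * m) * (δ * (a + b)) := by ring
      _ ≤ _ := mul_le_mul hδm h1 (by positivity) (by positivity)
  refine k1.trans ?_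
  rw [Real.rpow_neg pτ.le, Real.rpow_neg pa.le, Real.rpow_neg pb.le, ← mul_inv, ← mul_inv]
  apply inv_anti₀ (by positivity)
  have f1 : τ ^ (1/2:ℝ) * a ^ (1/4:ℝ) * b ^ (1/4:ℝ) ≤ m := by
    calc _ ≤ m ^ (1/2:ℝ) * m ^ (1/4:ℝ) * m ^ (1/4:ℝ) := by gcongr
      _ = m := by rw [← Real.rpow_add pm, ← Real.rpow_add pm]; norm_num
  have f2 : a ^ (1/2:ℝ) * b ^ (1/2:ℝ) ≤ a + b := by
    calc _ ≤ (a+b) ^ (1/2:ℝ) * (a+b) ^ (1/2:ℝ) := by gcongr <;> linarith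
      _ = a + b := by rw [← Real.rpow_add pab]; norm_num
  have g : ∀ x : ℝ, 0 < x → x ^ (3/4:ℝ) = x ^ (1/4:ℝ) * x ^ (1/2:ℝ) := by
    intro x hx; rw [← Real.rpow_add hx]; norm_num
  rw [g a pa, g b pb]
  calc _ = (τ ^ (1/2:ℝ) * a ^ (1/4:ℝ) * b ^ (1/4:ℝ)) * (a ^ (1/2:ℝ) * b ^ (1/2:ℝ)) := by ring
    _ ≤ _ := by gcongr

/-- Domain of integration. -/
def gapD (T Λ : ℝ) : Set (ℝ × ℝ) :=
  {t | 0 ≤ t.1 ∧ 0 < t.2 - t.1 ∧ t.2 ≤ T ∧ t.2 - t.1 ≤ Λ}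

/-- Weight. -/
noncomputable def gapW (T Λ : ℝ) (n : ℕ) : ℝ × ℝ → ℝ≥0∞ :=
  (gapD T Λ).indicator (fun t => ENNReal.ofReal ((t.2 - t.1)⁻¹) ^ (n + 1))

/-- Majorant in the first pair. -/
noncomputable def gapJ (T Λ : ℝ) : ℝ × ℝ → ℝ≥0∞ :=
  (gapD T Λ).indicator (fun t => ENNReal.ofReal ((t.2 - t.1) ^ (-(1/2) : ℝ)))

/-- Majorant in the differences. -/
noncomputable def gapH (Λ : ℝ) : ℝ → ℝ≥0∞ :=
  (Set.Icc (-Λ) Λ).indicator (fun a => (ENNReal.ofReal |a|) ^ (-(3/4) : ℝ))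

lemma gapD_meas (T Λ : ℝ) : MeasurableSet (gapD T Λ) := by
  have e : gapD T Λ = {t : ℝ × ℝ | 0 ≤ t.1} ∩ ({t : ℝ × ℝ | 0 < t.2 - t.1} ∩
      ({t : ℝ × ℝ | t.2 ≤ T} ∩ {t : ℝ × ℝ | t.2 - t.1 ≤ Λ})) := by
    ext t; rfl
  rw [e]
  exact (measurableSet_le (by fun_prop) (by fun_prop)).inter
    ((measurableSet_lt (by fun_prop) (by fun_prop)).inter
      ((measurableSet_le (by fun_prop) (by fun_prop)).inter
        (measurableSet_le (by fun_prop) (by fun_prop))))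

lemma gapW_meas (T Λ : ℝ) (n : ℕ) : Measurable (gapW T Λ n) :=
  Measurable.indicator (by fun_prop) (gapD_meas T Λ)

lemma gapJ_meas (T Λ : ℝ) : Measurable (gapJ T Λ) :=
  Measurable.indicator (by fun_prop) (gapD_meas T Λ)

lemma gapH_meas (Λ : ℝ) : Measurable (gapH Λ) :=
  Measurable.indicator (by fun_prop) measurableSet_Icc

lemma gapH_ne_zero {Λ a : ℝ} (h : |a| ≤ Λ) : gapH Λ a ≠ 0 := by
  rw [gapH, Set.indicator_of_mem (by simpa [abs_le] using h)]
  simp [ENNReal.rpow_eq_zero_iff]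
  intro _; norm_num

lemma gapH_zero {Λ : ℝ} (h : 0 ≤ Λ) : gapH Λ 0 = ⊤ := by
  rw [gapH, Set.indicator_of_mem (by simpa using h)]
  simp

lemma gapH_of_ne {Λ a : ℝ} (h : |a| ≤ Λ) (ha : a ≠ 0) :
    gapH Λ a = ENNReal.ofReal (|a| ^ (-(3/4) : ℝ)) := by
  rw [gapH, Set.indicator_of_mem (by simpa [abs_le] using h),
    ENNReal.ofReal_rpow_of_pos (abs_pos.2 ha)]

lemma gap_kernel (T Λ : ℝ) (t s : ℝ × ℝ) :
    ∑' n : ℕ, gapW T Λ (n + 1) t * gapW T Λ (n + 1) s *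
      ENNReal.ofReal (min t.2 s.2 - max t.1 s.1) ^ (2 * (n + 1)) ≤
    gapJ T Λ t * (gapH Λ (s.1 - t.1) * gapH Λ (s.2 - t.2)) := by
  by_cases ht : t ∈ gapD T Λ
  swap
  · simp [gapW, ht]
  by_cases hs : s ∈ gapD T Λ
  swap
  · simp [gapW, hs]
  by_cases hd : 0 < min t.2 s.2 - max t.1 s.1
  swap
  · simp [ENNReal.ofReal_of_nonpos (not_lt.1 hd)]
  obtain ⟨ht0, htp, htT, htΛ⟩ := id ht
  obtain ⟨hs0, hsp, hsT, hsΛ⟩ := id hs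
  have hJ : gapJ T Λ t = ENNReal.ofReal ((t.2 - t.1) ^ (-(1/2) : ℝ)) := by
    rw [gapJ, Set.indicator_of_mem ht]
  have hJ0 : gapJ T Λ t ≠ 0 := by
    rw [hJ]; simpa using Real.rpow_pos_of_pos htp _
  have e1 := min_le_left t.2 s.2
  have e2 := min_le_right t.2 s.2
  have e3 := le_max_left t.1 s.1
  have e4 := le_max_right t.1 s.1
  have ha' : |s.1 - t.1| ≤ Λ := by rw [abs_le]; constructor <;> linarith
  have hb' : |s.2 - t.2| ≤ Λ := by rw [abs_le]; constructor <;> linarith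
  have hΛ : 0 ≤ Λ := by linarith
  by_cases ha : s.1 - t.1 = 0
  · rw [ha, gapH_zero hΛ, ENNReal.top_mul (gapH_ne_zero hb'), ENNReal.mul_top hJ0]
    exact le_top
  by_cases hb : s.2 - t.2 = 0
  · rw [hb, gapH_zero hΛ, ENNReal.mul_top (gapH_ne_zero ha'), ENNReal.mul_top hJ0]
    exact le_top
  obtain ⟨r1, r2, -, -⟩ := gap_real (sub_pos.1 htp) (sub_pos.1 hsp) hd ha hb
  rw [hJ, gapH_of_ne ha' ha, gapH_of_ne hb' hb, ← ENNReal.ofReal_mul (by positivity),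
    ← ENNReal.ofReal_mul (by positivity)]
  refine le_trans (le_of_eq ?_) (ENNReal.ofReal_le_ofReal r2)
  have r0 : 0 ≤ (min t.2 s.2 - max t.1 s.1) ^ 2 / ((t.2 - t.1) * (s.2 - s.1)) := by positivity
  rw [← tsum_geometric_of_lt_one r0 r1, ← tsum_mul_left, ENNReal.ofReal_tsum_of_nonneg
    (fun n => by positivity) ((summable_geometric_of_lt_one r0 r1).mul_left _)]
  refine tsum_congr fun n => ?_
  rw [gapW, Set.indicator_of_mem ht, Set.indicator_of_mem hs,
    ← ENNReal.ofReal_pow (by positivity), ← ENNReal.ofReal_pow (by positivity),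
    ← ENNReal.ofReal_pow hd.le, ← ENNReal.ofReal_mul (by positivity),
    ← ENNReal.ofReal_mul (by positivity)]
  congr 1
  rw [div_eq_mul_inv, mul_inv, pow_mul, mul_pow, mul_pow]
  ring

lemma gap_rpow_int {Λ α : ℝ} (hΛ : 0 < Λ) (hα : -1 < α) :
    ∫⁻ x in Set.Ioc 0 Λ, ENNReal.ofReal (x ^ α) = ENNReal.ofReal (Λ ^ (α + 1) / (α + 1)) := by
  have hi := intervalIntegral.intervalIntegrable_rpow' (a := 0) (b := Λ) hα
  rw [← ofReal_integral_eq_lintegral_ofReal]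
  · rw [← intervalIntegral.integral_of_le hΛ.le, integral_rpow (Or.inl hα),
      Real.zero_rpow (by linarith)]
    simp
  · exact (intervalIntegrable_iff_integrableOn_Ioc_of_le hΛ.le).1 hi
  · filter_upwards [ae_restrict_mem measurableSet_Ioc] with x hx
    exact Real.rpow_nonneg hx.1.le _

lemma gapH_int {Λ : ℝ} (hΛ : 0 < Λ) :
    ∫⁻ a, gapH Λ a ≤ ENNReal.ofReal (8 * Λ ^ (1/4 : ℝ)) := by
  set k : ℝ → ℝ≥0∞ := (Set.Ioc 0 Λ).indicator (fun a => ENNReal.ofReal (a ^ (-(3/4) : ℝ))) with hk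
  have hkm : Measurable k := Measurable.indicator (by fun_prop) measurableSet_Ioc
  have hki : ∫⁻ a, k a = ENNReal.ofReal (4 * Λ ^ (1/4 : ℝ)) := by
    rw [hk, lintegral_indicator measurableSet_Ioc, gap_rpow_int hΛ (by norm_num)]
    congr 1; norm_num; ring
  have h0 : ∀ᵐ a : ℝ, a ≠ 0 := by simp [ae_iff]
  calc ∫⁻ a, gapH Λ a ≤ ∫⁻ a, (k a + k (-a)) := by
        apply lintegral_mono_ae
        filter_upwards [h0] with a ha
        by_cases h : |a| ≤ Λ
        · rw [gapH_of_ne h ha]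
          rcases lt_or_gt_of_ne ha with h' | h'
          · rw [abs_of_neg h'] at h ⊢
            refine le_trans (le_of_eq ?_) le_add_self
            rw [hk, Set.indicator_of_mem (by constructor <;> linarith)]
          · rw [abs_of_pos h'] at h ⊢
            refine le_trans (le_of_eq ?_) le_self_add
            rw [hk, Set.indicator_of_mem (by constructor <;> linarith)]
        · rw [gapH, Set.indicator_of_notMem (by simpa [abs_le] using h)]
          exact zero_le
    _ = ENNReal.ofReal (8 * Λ ^ (1/4 : ℝ)) := by
        rw [lintegral_add_left hkm, lintegral_neg_eq_self (f := k), hki,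
          ← ENNReal.ofReal_add (by positivity) (by positivity)]
        congr 1; ring

lemma gapJ_int {T Λ : ℝ} (hT : 0 < T) (hΛ : 0 < Λ) :
    ∫⁻ t, gapJ T Λ t ≤ ENNReal.ofReal (T * (2 * Λ ^ (1/2 : ℝ))) := by
  set k : ℝ → ℝ≥0∞ := (Set.Ioc 0 Λ).indicator (fun a => ENNReal.ofReal (a ^ (-(1/2) : ℝ))) with hk
  have hkm : Measurable k := Measurable.indicator (by fun_prop) measurableSet_Ioc
  have hki : ∫⁻ a, k a = ENNReal.ofReal (2 * Λ ^ (1/2 : ℝ)) := by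
    rw [hk, lintegral_indicator measurableSet_Ioc, gap_rpow_int hΛ (by norm_num)]
    congr 1; norm_num; ring
  set c : ℝ → ℝ≥0∞ := (Set.Icc 0 T).indicator (fun _ => 1) with hc
  have hcm : Measurable c := Measurable.indicator (by fun_prop) measurableSet_Icc
  have hci : ∫⁻ a, c a = ENNReal.ofReal T := by
    rw [hc, lintegral_indicator measurableSet_Icc]; simp
  calc ∫⁻ t, gapJ T Λ t ≤ ∫⁻ t : ℝ × ℝ, c t.1 * k (t.2 - t.1) := by
        apply lintegral_mono
        intro t
        by_cases ht : t ∈ gapD T Λ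
        · obtain ⟨ht0, htp, htT, htΛ⟩ := id ht
          simp only [gapJ, hc, hk]
          rw [Set.indicator_of_mem ht, Set.indicator_of_mem (show t.1 ∈ Set.Icc 0 T from ⟨ht0, by linarith⟩),
            Set.indicator_of_mem (show t.2 - t.1 ∈ Set.Ioc 0 Λ from ⟨htp, htΛ⟩), one_mul]
        · simp [gapJ, ht]
    _ = ∫⁻ x, ∫⁻ y, c x * k (y - x) := by
        rw [Measure.volume_eq_prod, lintegral_prod]
        exact (by fun_prop : Measurable fun t : ℝ × ℝ => c t.1 * k (t.2 - t.1)).aemeasurable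
    _ = ∫⁻ x, c x * ENNReal.ofReal (2 * Λ ^ (1/2 : ℝ)) := by
        congr 1; funext x
        rw [lintegral_const_mul _ (by fun_prop), lintegral_sub_right_eq_self k, hki]
    _ = _ := by
        rw [lintegral_mul_const _ hcm, hci, ← ENNReal.ofReal_mul hT.le]

lemma gap_majorant {T Λ : ℝ} (hT : 0 < T) (hΛ : 0 < Λ) :
    ∫⁻ t : ℝ × ℝ, ∫⁻ s : ℝ × ℝ, gapJ T Λ t * (gapH Λ (s.1 - t.1) * gapH Λ (s.2 - t.2)) ≤
      ENNReal.ofReal (128 * T * Λ) := by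
  have hH := gapH_meas Λ
  have h1 : ∀ t : ℝ × ℝ,
      ∫⁻ s : ℝ × ℝ, gapJ T Λ t * (gapH Λ (s.1 - t.1) * gapH Λ (s.2 - t.2)) =
        gapJ T Λ t * ((∫⁻ a, gapH Λ a) * (∫⁻ a, gapH Λ a)) := by
    intro t
    rw [lintegral_const_mul _ (by fun_prop), Measure.volume_eq_prod,
      lintegral_prod_mul (f := fun x => gapH Λ (x - t.1)) (g := fun x => gapH Λ (x - t.2))
        (by fun_prop) (by fun_prop),
      lintegral_sub_right_eq_self (gapH Λ), lintegral_sub_right_eq_self (gapH Λ)]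
  simp_rw [h1]
  rw [lintegral_mul_const _ (gapJ_meas T Λ)]
  calc _ ≤ ENNReal.ofReal (T * (2 * Λ ^ (1/2 : ℝ))) *
        (ENNReal.ofReal (8 * Λ ^ (1/4 : ℝ)) * ENNReal.ofReal (8 * Λ ^ (1/4 : ℝ))) := by
        gcongr
        · exact gapJ_int hT hΛ
        · exact gapH_int hΛ
        · exact gapH_int hΛ
    _ = _ := by
        rw [← ENNReal.ofReal_mul (by positivity), ← ENNReal.ofReal_mul (by positivity)]
        congr 1
        have : Λ ^ (1/2:ℝ) * (Λ ^ (1/4:ℝ) * Λ ^ (1/4:ℝ)) = Λ := by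
          rw [← Real.rpow_add hΛ, ← Real.rpow_add hΛ]; norm_num
        linear_combination 128 * T * this

/-- Squared norm after interchange. -/
noncomputable def gapB (T Λ : ℝ) (n : ℕ) : ℝ≥0∞ :=
  ∫⁻ t : ℝ × ℝ, ∫⁻ s : ℝ × ℝ, gapW T Λ n t * gapW T Λ n s *
      ENNReal.ofReal (min t.2 s.2 - max t.1 s.1) ^ (2 * n)

lemma gap_sumB {T Λ : ℝ} (hT : 0 < T) (hΛ : 0 < Λ) :
    ∑' n, gapB T Λ (n + 1) ≤ ENNReal.ofReal (128 * T * Λ) := by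
  refine le_trans ?_ (gap_majorant hT hΛ)
  have hW := gapW_meas T Λ
  have hm : ∀ n, Measurable (fun p : (ℝ × ℝ) × (ℝ × ℝ) => gapW T Λ n p.1 * gapW T Λ n p.2 *
      ENNReal.ofReal (min p.1.2 p.2.2 - max p.1.1 p.2.1) ^ (2 * n)) := by
    intro n
    have := hW n
    fun_prop
  simp only [gapB]
  rw [← lintegral_tsum (fun n => (hm (n+1)).lintegral_prod_right'.aemeasurable)]
  apply lintegral_mono
  intro t
  dsimp only
  have hm' : ∀ n, Measurable (fun s : ℝ × ℝ => gapW T Λ (n + 1) t * gapW T Λ (n + 1) s *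
      ENNReal.ofReal (min t.2 s.2 - max t.1 s.1) ^ (2 * (n + 1))) := fun n =>
    (hm (n+1)).comp measurable_prodMk_left
  rw [← lintegral_tsum (fun n => (hm' n).aemeasurable)]
  exact lintegral_mono fun s => gap_kernel T Λ t s

lemma gap_norm {T Λ : ℝ} (n : ℕ) (hn : 1 ≤ n) :
    ∫⁻ x in Set.univ.pi (fun _ : Fin (2 * n) => Set.Icc (0:ℝ) T),
      ENNReal.ofReal ((∫ t in {t : ℝ × ℝ | 0 ≤ t.1 ∧ t.1 ≤ (⨅ i, x i) ∧
                        (⨆ i, x i) ≤ t.2 ∧ t.2 ≤ T ∧ t.2 - t.1 ≤ Λ},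
                      (t.2 - t.1) ^ (-(1 + (n : ℕ) : ℝ))) ^ 2) ≤ gapB T Λ n := by
  have : Nonempty (Fin (2 * n)) := ⟨⟨0, by omega⟩⟩
  set P : Set ((ℝ × ℝ) × (Fin (2 * n) → ℝ)) := {p | ∀ i, p.1.1 ≤ p.2 i ∧ p.2 i ≤ p.1.2} with hP
  have hPm : MeasurableSet P := by
    have e : P = ⋂ i, ({p : (ℝ × ℝ) × (Fin (2 * n) → ℝ) | p.1.1 ≤ p.2 i} ∩
        {p : (ℝ × ℝ) × (Fin (2 * n) → ℝ) | p.2 i ≤ p.1.2}) := by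
      ext p; simp [hP]
    rw [e]
    exact MeasurableSet.iInter fun i => (measurableSet_le (by fun_prop) (by fun_prop)).inter
      (measurableSet_le (by fun_prop) (by fun_prop))
  set F : (ℝ × ℝ) × (Fin (2 * n) → ℝ) → ℝ≥0∞ :=
    fun p => gapW T Λ n p.1 * P.indicator (fun _ => 1) p with hF
  have hW := gapW_meas T Λ n
  have hFm : Measurable F :=
    (hW.comp measurable_fst).mul (Measurable.indicator measurable_const hPm)
  have step1 : ∀ x : Fin (2 * n) → ℝ,
      ENNReal.ofReal ((∫ t in {t : ℝ × ℝ | 0 ≤ t.1 ∧ t.1 ≤ (⨅ i, x i) ∧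
                        (⨆ i, x i) ≤ t.2 ∧ t.2 ≤ T ∧ t.2 - t.1 ≤ Λ},
                      (t.2 - t.1) ^ (-(1 + (n : ℕ) : ℝ))) ^ 2) ≤
      ∫⁻ t, ∫⁻ s, F (t, x) * F (s, x) := by
    intro x
    set S : Set (ℝ × ℝ) := {t : ℝ × ℝ | 0 ≤ t.1 ∧ t.1 ≤ (⨅ i, x i) ∧
                        (⨆ i, x i) ≤ t.2 ∧ t.2 ≤ T ∧ t.2 - t.1 ≤ Λ} with hS
    have hSm : MeasurableSet S := by
      have e : S = {t : ℝ × ℝ | 0 ≤ t.1} ∩ ({t : ℝ × ℝ | t.1 ≤ (⨅ i, x i)} ∩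
          ({t : ℝ × ℝ | (⨆ i, x i) ≤ t.2} ∩
            ({t : ℝ × ℝ | t.2 ≤ T} ∩ {t : ℝ × ℝ | t.2 - t.1 ≤ Λ}))) := by
        ext t; rfl
      rw [e]
      exact (measurableSet_le (by fun_prop) (by fun_prop)).inter
        ((measurableSet_le (by fun_prop) (by fun_prop)).inter
          ((measurableSet_le (by fun_prop) (by fun_prop)).inter
            ((measurableSet_le (by fun_prop) (by fun_prop)).inter
              (measurableSet_le (by fun_prop) (by fun_prop)))))
    have hle : ‖∫ t in S, (t.2 - t.1) ^ (-(1 + (n : ℕ) : ℝ))‖ₑ ≤ ∫⁻ t, F (t, x) := by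
      refine (enorm_integral_le_lintegral_enorm _).trans ?_
      rw [← lintegral_indicator hSm]
      apply lintegral_mono
      intro t
      by_cases ht : t ∈ S
      swap
      · simp [ht]
      obtain ⟨h0, h1, h2, h3, h4⟩ := id ht
      have hx1 : ∀ i, t.1 ≤ x i := fun i => h1.trans (ciInf_le (Set.finite_range x).bddBelow i)
      have hx2 : ∀ i, x i ≤ t.2 := fun i => (le_ciSup (Set.finite_range x).bddAbove i).trans h2
      have hle : t.1 ≤ t.2 := (hx1 (Classical.arbitrary _)).trans (hx2 _)
      rw [Set.indicator_of_mem ht]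
      rcases hle.eq_or_lt with he | hlt
      · rw [he, sub_self, Real.zero_rpow]
        · simp
        · have : (0:ℝ) ≤ n := by positivity
          linarith
      · have hD : t ∈ gapD T Λ := ⟨h0, sub_pos.2 hlt, h3, h4⟩
        have hPx : (t, x) ∈ P := fun i => ⟨hx1 i, hx2 i⟩
        have hτ : 0 < t.2 - t.1 := sub_pos.2 hlt
        simp only [hF, gapW]
        rw [Set.indicator_of_mem hD, Set.indicator_of_mem hPx, mul_one,
          Real.enorm_of_nonneg (by positivity), ← ENNReal.ofReal_pow (by positivity)]
        apply le_of_eq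
        congr 1
        rw [Real.rpow_neg hτ.le, inv_pow, ← Real.rpow_natCast]
        push_cast
        rw [add_comm]
    have hx : Measurable (fun t => F (t, x)) := hFm.comp measurable_prodMk_right
    calc _ = ‖∫ t in S, (t.2 - t.1) ^ (-(1 + (n : ℕ) : ℝ))‖ₑ ^ 2 := by
          rw [← sq_abs, ENNReal.ofReal_pow (abs_nonneg _), Real.enorm_eq_ofReal_abs]
      _ ≤ (∫⁻ t, F (t, x)) ^ 2 := by gcongr
      _ = _ := by
          simp_rw [lintegral_const_mul _ hx]
          rw [lintegral_mul_const _ hx, sq]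
  calc _ ≤ ∫⁻ x : Fin (2 * n) → ℝ, ∫⁻ t, ∫⁻ s, F (t, x) * F (s, x) :=
        (lintegral_mono step1).trans (setLIntegral_le_lintegral _ _)
    _ = ∫⁻ t, ∫⁻ x : Fin (2 * n) → ℝ, ∫⁻ s, F (t, x) * F (s, x) := by
        rw [lintegral_lintegral_swap]
        apply Measurable.aemeasurable
        apply Measurable.lintegral_prod_right (f := fun (q : (Fin (2 * n) → ℝ) × (ℝ × ℝ)) s => F (q.2, q.1) * F (s, q.1))
        simp only [Function.uncurry_def]
        fun_prop
    _ = ∫⁻ t, ∫⁻ s, ∫⁻ x : Fin (2 * n) → ℝ, F (t, x) * F (s, x) := by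
        congr 1; funext t
        rw [lintegral_lintegral_swap]
        apply Measurable.aemeasurable
        simp only [Function.uncurry_def]
        fun_prop
    _ = gapB T Λ n := by
        rw [gapB]
        congr 1; funext t
        congr 1; funext s
        set Q : Set (Fin (2 * n) → ℝ) :=
          Set.univ.pi (fun _ => Set.Icc (max t.1 s.1) (min t.2 s.2)) with hQ
        have hQm : MeasurableSet Q := MeasurableSet.univ_pi fun _ => measurableSet_Icc
        have : ∀ x, F (t, x) * F (s, x) =
            (gapW T Λ n t * gapW T Λ n s) * Q.indicator (fun _ => 1) x := by
          intro x
          have hiff : x ∈ Q ↔ ((t, x) ∈ P ∧ (s, x) ∈ P) := by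
            simp only [hQ, hP, Set.mem_univ_pi, Set.mem_Icc, max_le_iff, le_min_iff,
              Set.mem_ofPred_eq, ← forall_and]
            exact forall_congr' fun i => by tauto
          simp only [hF]
          by_cases h1 : (t, x) ∈ P <;> by_cases h2 : (s, x) ∈ P <;>
            simp [Set.indicator, hiff, h1, h2]
        simp_rw [this]
        rw [lintegral_const_mul _ (Measurable.indicator measurable_const hQm),
          lintegral_indicator hQm]
        rw [lintegral_const, one_mul, Measure.restrict_apply_univ, hQ, volume_pi_pi]
        simp

/-- Rate of convergence of the gap regularization (Theorem 2 of the paper):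
with `R_{n,Λ}(u₁,…,u_{2n}) = ∫∫_{0 ≤ t₁ ≤ min uᵢ, max uᵢ ≤ t₂ ≤ T, t₂−t₁ ≤ Λ}
(t₂−t₁)^(−(1+n)) dt₁ dt₂`, there is a constant `C > 0` (depending only on `T`)
such that for all `0 < Λ ≤ min(T,1)/2`,
`∑_{𝐧=(n₁,n₂), n₁+n₂ ≥ 1} (2n₁)!(2n₂)!/((2π)² 4^{n₁+n₂} (n₁!n₂!)²) ·
‖R_{n₁+n₂,Λ}‖²_{L²([0,T]^{2(n₁+n₂)})} ≤ C Λ (ln Λ)²`, i.e.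
`‖L^(2) − L^(2)(Λ)‖² = O(TΛ ln²Λ)`. -/
theorem gap_regularization_rate (T : ℝ) (hT : 0 < T) :
    ∃ C : ℝ, 0 < C ∧ ∀ Λ : ℝ, 0 < Λ → Λ ≤ min T 1 / 2 →
      (∑' q : ℕ × ℕ,
          if 1 ≤ q.1 + q.2 then
            ENNReal.ofReal
                ((((2 * q.1).factorial * (2 * q.2).factorial : ℕ) : ℝ) /
                  ((2 * Real.pi) ^ 2 * 4 ^ (q.1 + q.2) *
                    ((q.1.factorial * q.2.factorial : ℕ) : ℝ) ^ 2)) *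
              ∫⁻ x in Set.univ.pi
                  (fun _ : Fin (2 * (q.1 + q.2)) => Set.Icc (0:ℝ) T),
                ENNReal.ofReal
                  ((∫ t in {t : ℝ × ℝ | 0 ≤ t.1 ∧ t.1 ≤ (⨅ i, x i) ∧
                        (⨆ i, x i) ≤ t.2 ∧ t.2 ≤ T ∧ t.2 - t.1 ≤ Λ},
                      (t.2 - t.1) ^ (-(1 + (q.1 + q.2 : ℕ) : ℝ))) ^ 2)
          else 0) ≤
        ENNReal.ofReal (C * Λ * (Real.log Λ) ^ 2) := by
  refine ⟨128 * T / (Real.log 2) ^ 2, ?_, ?_⟩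
  · have := Real.log_pos (by norm_num : (1:ℝ) < 2)
    positivity
  intro Λ hΛ hle
  have h2 := Real.log_pos (by norm_num : (1:ℝ) < 2)
  have hΛ2 : Λ ≤ 1 / 2 := hle.trans (by have := min_le_right T 1; linarith)
  have hlog : (Real.log 2) ^ 2 ≤ (Real.log Λ) ^ 2 := by
    have : Real.log Λ ≤ Real.log (1/2) := Real.log_le_log hΛ hΛ2
    rw [one_div, Real.log_inv] at this
    nlinarith
  calc _ ≤ ∑' q : ℕ × ℕ, (if 1 ≤ q.1 + q.2 then
      ENNReal.ofReal ((q.1.centralBinom : ℝ) * (q.2.centralBinom : ℝ) / 4 ^ (q.1 + q.2))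
        * gapB T Λ (q.1 + q.2) else 0) := by
        refine ENNReal.tsum_le_tsum fun q => ?_
        split_ifs with h
        · exact mul_le_mul' (gap_coef q) (gap_norm (q.1 + q.2) h)
        · exact le_rfl
    _ = _ := gap_tsum (gapB T Λ)
    _ ≤ _ := gap_sumB hT hΛ
    _ ≤ _ := by
        apply ENNReal.ofReal_le_ofReal
        have : 128 * T * Λ * (Real.log 2) ^ 2 ≤ 128 * T * Λ * (Real.log Λ) ^ 2 := by gcongr
        rw [show 128 * T / (Real.log 2) ^ 2 * Λ * (Real.log Λ) ^ 2
          = 128 * T * Λ * (Real.log Λ) ^ 2 / (Real.log 2) ^ 2 by ring]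
        rwa [le_div_iff₀ (by positivity)]
end

section
/- Let (Ω, ℱ, μ) be a probability space, let T > 0, and let X be a real random variable on Ω. Suppose there exist constants k ≥ 0 and K > 0 and, for each Λ ∈ (0,1), a real random variable X_Λ on Ω such that X_Λ ≥ −k − (T/(2π))·|ln Λ| almost surely and E[(X_Λ − X)²] ≤ K·Λ·(ln Λ)². Then for every α with 0 < α < 2π/T and every N > k, setting Λ = exp(−α(N−k)), one has μ( X ≤ −N ) ≤ ( K α² / (1 − Tα/(2π))² ) · exp( −α(N−k) ). -/
open MeasureTheory Real

/-- Chebyshev tail estimate (Section 4 of the paper): on a probability space,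
if `X` can be approximated by random variables `X_Λ`, `Λ ∈ (0,1)`, with
`X_Λ ≥ −k − (T/2π)|ln Λ|` a.s. and `E[(X_Λ − X)²] ≤ KΛ ln²Λ`, then for every
`0 < α < 2π/T` and `N > k`, taking `Λ = exp(−α(N−k))`,
`μ(X ≤ −N) ≤ (Kα²/(1 − Tα/(2π))²) exp(−α(N−k))`. -/
theorem chebyshev_tail_estimate {Ω : Type*} [MeasurableSpace Ω]
    (μ : Measure Ω) [IsProbabilityMeasure μ] (T : ℝ) (hT : 0 < T)
    (X : Ω → ℝ) (hX : Measurable X) (k K : ℝ) (hk : 0 ≤ k) (hK : 0 < K)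
    (XΛ : ℝ → Ω → ℝ) (hXΛmeas : ∀ Λ ∈ Set.Ioo (0:ℝ) 1, Measurable (XΛ Λ))
    (hlb : ∀ Λ ∈ Set.Ioo (0:ℝ) 1,
      ∀ᵐ ω ∂μ, -(k + T / (2 * Real.pi) * |Real.log Λ|) ≤ XΛ Λ ω)
    (hvar : ∀ Λ ∈ Set.Ioo (0:ℝ) 1,
      (∫⁻ ω, ENNReal.ofReal ((XΛ Λ ω - X ω) ^ 2) ∂μ) ≤
        ENNReal.ofReal (K * Λ * (Real.log Λ) ^ 2)) :
    ∀ α : ℝ, 0 < α → α < 2 * Real.pi / T → ∀ N : ℝ, k < N →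
      μ {ω | X ω ≤ -N} ≤
        ENNReal.ofReal
          (K * α ^ 2 / (1 - T * α / (2 * Real.pi)) ^ 2 *
            Real.exp (-α * (N - k))) := by
  intro α hα hαT N hN
  have hpi := Real.pi_pos
  have hNk : 0 < N - k := sub_pos.mpr hN
  have hmem : Real.exp (-α * (N - k)) ∈ Set.Ioo (0:ℝ) 1 := by
    refine ⟨Real.exp_pos _, ?_⟩
    rw [Real.exp_lt_one_iff]
    nlinarith [mul_pos hα hNk]
  have hl := hlb _ hmem
  have hv := hvar _ hmem
  have hm := hXΛmeas _ hmem
  have habs : |Real.log (Real.exp (-α * (N - k)))| = α * (N - k) := by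
    rw [Real.log_exp, neg_mul, abs_neg, abs_of_pos (mul_pos hα hNk)]
  rw [habs] at hl
  rw [Real.log_exp] at hv
  set Y := XΛ (Real.exp (-α * (N - k))) with hY
  set d := 1 - T * α / (2 * Real.pi) with hd
  have hdpos : 0 < d := by
    rw [hd, sub_pos, div_lt_one (by positivity)]
    rw [lt_div_iff₀ hT] at hαT
    linarith
  have hcpos : 0 < d * (N - k) := mul_pos hdpos hNk
  have hc2 : 0 < (d * (N - k)) ^ 2 := by positivity
  have h1 : μ {ω | X ω ≤ -N} ≤
      μ {ω | ENNReal.ofReal ((d * (N - k)) ^ 2) ≤ ENNReal.ofReal ((Y ω - X ω) ^ 2)} := by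
    apply measure_mono_ae
    filter_upwards [hl] with ω hω hx
    change X ω ≤ -N at hx
    change ENNReal.ofReal ((d * (N - k)) ^ 2) ≤ ENNReal.ofReal ((Y ω - X ω) ^ 2)
    apply ENNReal.ofReal_le_ofReal
    have : d * (N - k) ≤ Y ω - X ω := by
      have e : d * (N - k) = N - k - T / (2 * Real.pi) * (α * (N - k)) := by
        rw [hd]; ring
      linarith
    gcongr
  have h2 := meas_ge_le_lintegral_div (μ := μ)
    (f := fun ω => ENNReal.ofReal ((Y ω - X ω) ^ 2))
    ((hm.sub hX).pow_const 2).ennreal_ofReal.aemeasurable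
    (ε := ENNReal.ofReal ((d * (N - k)) ^ 2))
    (by simpa using hc2.ne') ENNReal.ofReal_ne_top
  refine h1.trans (h2.trans ((ENNReal.div_le_div_right hv _).trans ?_))
  rw [← ENNReal.ofReal_div_of_pos hc2]
  apply ENNReal.ofReal_le_ofReal
  apply le_of_eq
  field_simp
end

section
/- Let (Ω, ℱ, μ) be a probability space, let T > 0, and let X be a real random variable on Ω. Suppose there exist constants k ≥ 0 and K > 0 and, for each Λ ∈ (0,1), a real random variable X_Λ on Ω such that X_Λ ≥ −k − (T/(2π))·|ln Λ| almost surely and E[(X_Λ − X)²] ≤ K·Λ·(ln Λ)². Then for every g with 0 < g < 2π/T, the expectation E[ exp(−g X) ] is finite. -/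
open MeasureTheory Real

/-- Abstract form of the strengthened Varadhan theorem (Section 4):
on a probability space, if `X` can be approximated by random variables `X_Λ`,
`Λ ∈ (0,1)`, with `X_Λ ≥ −k − (T/2π)|ln Λ|` a.s. and
`E[(X_Λ − X)²] ≤ KΛ ln²Λ`, then `E[exp(−gX)] < ∞` for every `0 < g < 2π/T`. -/
theorem exp_neg_integrable_of_approx {Ω : Type*} [MeasurableSpace Ω]
    (μ : Measure Ω) [IsProbabilityMeasure μ] (T : ℝ) (hT : 0 < T)
    (X : Ω → ℝ) (hX : Measurable X) (k K : ℝ) (hk : 0 ≤ k) (hK : 0 < K)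
    (XΛ : ℝ → Ω → ℝ) (hXΛmeas : ∀ Λ ∈ Set.Ioo (0:ℝ) 1, Measurable (XΛ Λ))
    (hlb : ∀ Λ ∈ Set.Ioo (0:ℝ) 1,
      ∀ᵐ ω ∂μ, -(k + T / (2 * Real.pi) * |Real.log Λ|) ≤ XΛ Λ ω)
    (hvar : ∀ Λ ∈ Set.Ioo (0:ℝ) 1,
      (∫⁻ ω, ENNReal.ofReal ((XΛ Λ ω - X ω) ^ 2) ∂μ) ≤
        ENNReal.ofReal (K * Λ * (Real.log Λ) ^ 2)) :
    ∀ g : ℝ, 0 < g → g < 2 * Real.pi / T →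
      (∫⁻ ω, ENNReal.ofReal (Real.exp (-g * X ω)) ∂μ) < ⊤ := by
  intro g hg hgT
  set c : ℝ := T / (2 * Real.pi) with hc
  have hpi := Real.pi_pos
  have hcpos : 0 < c := by positivity
  have hgc : g * c < 1 := by
    rw [hc, mul_div_assoc', div_lt_one (by positivity)]
    exact (lt_div_iff₀ hT).1 hgT
  let A : ℕ → Set Ω := fun m => {ω | X ω < -(k + 1 + c * ((m : ℝ) + 1))}
  have hA : ∀ m, MeasurableSet (A m) := fun m => measurableSet_lt hX measurable_const
  let C : ℕ → ℝ := fun m => Real.exp (g * (k + 1 + c * ((m : ℝ) + 2)))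
  let f : ℕ → Ω → ENNReal := fun m => (A m).indicator (fun _ => ENNReal.ofReal (C m))
  have hfm : ∀ m, Measurable (f m) := fun m => measurable_const.indicator (hA m)
  have hpt : ∀ ω, ENNReal.ofReal (Real.exp (-g * X ω)) ≤
      ENNReal.ofReal (Real.exp (g * (k + 1 + c))) + ∑' m, f m ω := by
    intro ω
    have h1 : (-X ω - (k + 1)) / c ≤ (⌈(-X ω - (k + 1)) / c⌉₊ : ℝ) := Nat.le_ceil _
    have h2 : ∀ m : ℕ, m < ⌈(-X ω - (k + 1)) / c⌉₊ → (m : ℝ) < (-X ω - (k + 1)) / c :=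
      fun m hm => Nat.lt_ceil.1 hm
    generalize ⌈(-X ω - (k + 1)) / c⌉₊ = N at h1 h2
    rw [div_le_iff₀ hcpos] at h1
    rcases Nat.lt_or_ge N 2 with hN | hN
    · refine le_trans (ENNReal.ofReal_le_ofReal (Real.exp_le_exp.2 ?_)) le_self_add
      have hN1 : (N : ℝ) ≤ 1 := by exact_mod_cast Nat.lt_succ_iff.1 hN
      have : -X ω ≤ k + 1 + c := by nlinarith
      nlinarith
    · obtain ⟨m, rfl⟩ := Nat.exists_eq_add_of_le' hN
      have h3 := h2 (m + 1) (by omega)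
      rw [lt_div_iff₀ hcpos] at h3
      push_cast at h1 h3
      have hmem : ω ∈ A m := by
        change X ω < -(k + 1 + c * ((m : ℝ) + 1))
        linarith
      refine le_trans ?_ (le_trans (ENNReal.le_tsum m) le_add_self)
      simp only [f, Set.indicator_of_mem hmem]
      refine ENNReal.ofReal_le_ofReal (Real.exp_le_exp.2 ?_)
      have : -X ω ≤ k + 1 + c * ((m : ℝ) + 2) := by linarith
      nlinarith
  have hint : ∀ m, ∫⁻ ω, f m ω ∂μ ≤
      ENNReal.ofReal (C m * (K * Real.exp (-((m : ℝ) + 1)) * ((m : ℝ) + 1) ^ 2)) := by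
    intro m
    have hΛ : Real.exp (-((m : ℝ) + 1)) ∈ Set.Ioo (0 : ℝ) 1 :=
      ⟨Real.exp_pos _, Real.exp_lt_one_iff.2 (by linarith [(Nat.cast_nonneg m : (0 : ℝ) ≤ m)])⟩
    have hl := hlb _ hΛ
    have hv := hvar _ hΛ
    have hm := hXΛmeas _ hΛ
    generalize XΛ (Real.exp (-((m : ℝ) + 1))) = Y at hl hv hm
    rw [Real.log_exp, neg_sq] at hv
    rw [Real.log_exp, abs_neg, abs_of_nonneg (by positivity)] at hl
    have hle : f m ≤ᵐ[μ] fun ω => ENNReal.ofReal (C m) * ENNReal.ofReal ((Y ω - X ω) ^ 2) := by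
      filter_upwards [hl] with ω hω
      by_cases h : ω ∈ A m
      · simp only [f, Set.indicator_of_mem h]
        have h' : X ω < -(k + 1 + c * ((m : ℝ) + 1)) := h
        have h1 : 1 ≤ Y ω - X ω := by linarith
        have h2 : (1 : ENNReal) ≤ ENNReal.ofReal ((Y ω - X ω) ^ 2) := by
          rw [ENNReal.one_le_ofReal]
          nlinarith
        exact le_mul_of_one_le_right' h2
      · simp [f, h]
    calc ∫⁻ ω, f m ω ∂μ
        ≤ ∫⁻ ω, ENNReal.ofReal (C m) * ENNReal.ofReal ((Y ω - X ω) ^ 2) ∂μ := lintegral_mono_ae hle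
      _ = ENNReal.ofReal (C m) * ∫⁻ ω, ENNReal.ofReal ((Y ω - X ω) ^ 2) ∂μ :=
          lintegral_const_mul' _ _ ENNReal.ofReal_ne_top
      _ ≤ _ := by
          rw [ENNReal.ofReal_mul (Real.exp_pos _).le]
          gcongr
  have hsum : Summable fun m : ℕ =>
      C m * (K * Real.exp (-((m : ℝ) + 1)) * ((m : ℝ) + 1) ^ 2) := by
    have h0 : Summable fun n : ℕ => (n : ℝ) ^ 2 * Real.exp (g * c - 1) ^ n := by
      apply summable_pow_mul_geometric_of_norm_lt_one
      rw [Real.norm_of_nonneg (Real.exp_pos _).le]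
      exact Real.exp_lt_one_iff.2 (by linarith)
    have h1 := ((summable_nat_add_iff 1).2 h0).mul_left (K * Real.exp (g * (k + 1 + c)))
    refine h1.congr fun m => ?_
    simp only [C]
    rw [← Real.exp_nat_mul]
    have : Real.exp (g * (k + 1 + c * ((m : ℝ) + 2))) * Real.exp (-((m : ℝ) + 1)) =
        Real.exp (g * (k + 1 + c)) * Real.exp (((m + 1 : ℕ) : ℝ) * (g * c - 1)) := by
      rw [← Real.exp_add, ← Real.exp_add]
      congr 1
      push_cast
      ring
    push_cast at this ⊢
    linear_combination (-K * ((m : ℝ) + 1) ^ 2) * this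
  calc ∫⁻ ω, ENNReal.ofReal (Real.exp (-g * X ω)) ∂μ
      ≤ ∫⁻ ω, (ENNReal.ofReal (Real.exp (g * (k + 1 + c))) + ∑' m, f m ω) ∂μ := lintegral_mono hpt
    _ = ENNReal.ofReal (Real.exp (g * (k + 1 + c))) + ∑' m, ∫⁻ ω, f m ω ∂μ := by
        rw [lintegral_add_left measurable_const, lintegral_tsum fun m => (hfm m).aemeasurable]
        simp
    _ ≤ ENNReal.ofReal (Real.exp (g * (k + 1 + c))) + ∑' m : ℕ,
          ENNReal.ofReal (C m * (K * Real.exp (-((m : ℝ) + 1)) * ((m : ℝ) + 1) ^ 2)) := by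
        gcongr with m
        exact hint m
    _ < ⊤ := ENNReal.add_lt_top.2 ⟨ENNReal.ofReal_lt_top, hsum.tsum_ofReal_lt_top⟩
end
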